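/- Let (𝔭_j)_{j∈ℕ} be nonnegative reals with Σ_{j=0}^∞ 𝔭_j < 1 (so that the killing probability 𝔭_Δ := 1 − Σ_{j=0}^∞ 𝔭_j is strictly positive), and let a_k := μ_k(0) be the occupation probabilities of 0 for the boundary random walk started at i₀ = 0. Then the series Σ_{k=0}^∞ a_k converges and Σ_{k=0}^∞ a_k = 1/𝔭_Δ. -/

import Mathlib

/-- The substochastic transition matrix of a boundary random walk on ℕ with
jumping measure `p` at the boundary state `0`. -/
noncomputable def Ptrans (p : ℕ → ℝ) : ℕ → ℕ → ℝ
  | 0, j => p j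
  | i + 1, j => if j = i ∨ j = i + 2 then 1 / 2 else 0

/-- The (substochastic) distribution at time `k` of the boundary random walk
with jumping measure `p` started at `i₀`. -/
noncomputable def occ (p : ℕ → ℝ) (i₀ : ℕ) : ℕ → ℕ → ℝ
  | 0 => fun j => if j = i₀ then 1 else 0
  | k + 1 => fun j => ∑' i : ℕ, occ p i₀ k i * Ptrans p i j

/-- Contribution of the left neighbour. -/
def prv (f : ℕ → ℝ) : ℕ → ℝ
  | 0 => 0
  | 1 => 0
  | j + 2 => f (j + 1)

lemma occ_succ (p : ℕ → ℝ) (k j : ℕ) :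
    occ p 0 (k + 1) j = occ p 0 k 0 * p j + 1 / 2 * occ p 0 k (j + 1)
      + 1 / 2 * prv (occ p 0 k) j := by
  have h : occ p 0 (k + 1) j = ∑' i : ℕ, occ p 0 k i * Ptrans p i j := rfl
  rw [h, tsum_eq_sum (s := Finset.range (j + 2))]
  · rw [Finset.sum_range_succ']
    have hz : ∀ i ∈ Finset.range (j + 1), occ p 0 k (i + 1) * Ptrans p (i + 1) j
        = (if i = j then 1 / 2 * occ p 0 k (j + 1) else 0)
          + (if i + 2 = j then 1 / 2 * prv (occ p 0 k) j else 0) := by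
      intro i _
      by_cases h1 : i = j
      · subst h1
        simp [Ptrans]; ring
      · by_cases h2 : i + 2 = j
        · subst h2
          simp [Ptrans, prv]; ring
        · have h3 : ¬ (j = i ∨ j = i + 2) := by omega
          simp [Ptrans, h1, h2, h3]
    rw [Finset.sum_congr rfl hz, Finset.sum_add_distrib]
    have e1 : ∑ i ∈ Finset.range (j + 1), (if i = j then 1 / 2 * occ p 0 k (j + 1) else 0)
        = 1 / 2 * occ p 0 k (j + 1) := by
      rw [Finset.sum_ite_eq']; simp
    have e2 : ∑ i ∈ Finset.range (j + 1), (if i + 2 = j then 1 / 2 * prv (occ p 0 k) j else 0)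
        = 1 / 2 * prv (occ p 0 k) j := by
      match j with
      | 0 => simp [prv]
      | 1 => simp [prv]
      | j + 2 =>
        have : ∀ i, (i + 2 = j + 2) = (i = j) := by intro i; simp
        simp only [this]
        rw [Finset.sum_ite_eq', if_pos (by simp)]
    rw [e1, e2]
    simp only [Ptrans]
    ring
  · intro i hi
    simp only [Finset.mem_range, not_lt] at hi
    obtain ⟨m, rfl⟩ : ∃ m, i = m + 1 := ⟨i - 1, by omega⟩
    have h3 : ¬ (j = m ∨ j = m + 2) := by omega
    simp [Ptrans, h3]

lemma occ_nonneg (p : ℕ → ℝ) (hp0 : ∀ j, 0 ≤ p j) (k : ℕ) : ∀ j, 0 ≤ occ p 0 k j := by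
  induction k with
  | zero => intro j; simp only [occ]; split_ifs <;> norm_num
  | succ k ih =>
    intro j
    rw [occ_succ]
    have h1 := mul_nonneg (ih 0) (hp0 j)
    have h2 := ih (j + 1)
    have h3 : 0 ≤ prv (occ p 0 k) j := by
      match j with
      | 0 => simp [prv]
      | 1 => simp [prv]
      | j + 2 => exact ih _
    linarith

lemma occ_mass (p : ℕ → ℝ) (hpsum : Summable p) (n : ℕ) :
    HasSum (occ p 0 n)
      (1 - (∑ k ∈ Finset.range n, occ p 0 k 0) * (1 - ∑' j, p j)) := by
  induction n with
  | zero =>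
    simp only [Finset.range_zero, Finset.sum_empty, zero_mul, sub_zero]
    exact hasSum_ite_eq 0 (1 : ℝ)
  | succ n ih =>
    set M := 1 - (∑ k ∈ Finset.range n, occ p 0 k 0) * (1 - ∑' j, p j) with hM
    have h1 : HasSum (fun j => occ p 0 n (j + 1)) (M - occ p 0 n 0) := by
      rw [hasSum_nat_add_iff (f := occ p 0 n) 1]
      simpa using ih
    have h2 : HasSum (prv (occ p 0 n)) (M - occ p 0 n 0) := by
      have := (hasSum_nat_add_iff (f := prv (occ p 0 n)) (g := M - occ p 0 n 0) 2).1 h1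
      simpa [Finset.sum_range_succ, prv] using this
    have h3 := ((hpsum.hasSum.mul_left (occ p 0 n 0)).add (h1.mul_left (1 / 2))).add
      (h2.mul_left (1 / 2))
    have hf : occ p 0 (n + 1) = fun j => occ p 0 n 0 * p j + 1 / 2 * occ p 0 n (j + 1)
      + 1 / 2 * prv (occ p 0 n) j := funext (occ_succ p n)
    rw [hf]
    have he : 1 - (∑ k ∈ Finset.range (n + 1), occ p 0 k 0) * (1 - ∑' j, p j)
        = occ p 0 n 0 * ∑' b, p b + 1 / 2 * (M - occ p 0 n 0) + 1 / 2 * (M - occ p 0 n 0) := by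
      rw [Finset.sum_range_succ, hM]
      ring
    rw [he]
    exact h3

/-- If the killing probability `𝔭_Δ = 1 - ∑ⱼ 𝔭ⱼ` is strictly positive, then the total
expected time spent at `0` by the boundary random walk started at `0` is `1/𝔭_Δ`. -/
theorem stmt3 (p : ℕ → ℝ) (hp0 : ∀ j, 0 ≤ p j) (hpsum : Summable p)
    (hp1 : ∑' j : ℕ, p j < 1) :
    Summable (fun k : ℕ => occ p 0 k 0) ∧
      ∑' k : ℕ, occ p 0 k 0 = 1 / (1 - ∑' j : ℕ, p j) := by
  have hd : 0 < 1 - ∑' j, p j := by linarith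
  have hnn := occ_nonneg p hp0
  have hbd : ∀ n, ∑ k ∈ Finset.range n, occ p 0 k 0 ≤ 1 / (1 - ∑' j, p j) := by
    intro n
    rw [le_div_iff₀ hd]
    have := (occ_mass p hpsum n).nonneg (hnn n)
    linarith
  have hs0 : Summable (fun k : ℕ => occ p 0 k 0) :=
    summable_of_sum_range_le (fun k => hnn k 0) hbd
  refine ⟨hs0, le_antisymm (hs0.tsum_le_of_sum_range_le hbd) ?_⟩
  -- summability of all the Green function entries
  have hstep : ∀ j, Summable (fun k => occ p 0 k j) →
      Summable (fun k => prv (occ p 0 k) j) → Summable (fun k => occ p 0 k (j + 1)) := by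
    intro j hj hpj
    have hj' := (summable_nat_add_iff 1).2 hj
    have := ((hj'.sub (hs0.mul_right (p j))).sub (hpj.mul_left (1 / 2))).mul_left 2
    refine this.congr (fun k => ?_)
    rw [occ_succ]; ring
  have hz : Summable (fun _ : ℕ => (0 : ℝ)) := summable_zero
  have hs1 : Summable (fun k => occ p 0 k 1) := hstep 0 hs0 hz
  have hs2 : ∀ n, Summable (fun k => occ p 0 k (n + 1)) ∧
      Summable (fun k => occ p 0 k (n + 2)) := by
    intro n
    induction n with
    | zero => exact ⟨hs1, hstep 1 hs1 hz⟩
    | succ n ih => exact ⟨ih.2, hstep (n + 2) ih.2 ih.1⟩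
  set A := ∑' k, occ p 0 k 0 with hA
  set G : ℕ → ℝ := fun j => ∑' k, occ p 0 k j with hG
  have hG0 : G 0 = A := rfl
  have hGnn : ∀ j, 0 ≤ G j := fun j => tsum_nonneg (fun k => hnn k j)
  have hrec : ∀ j, Summable (fun k => occ p 0 k j) →
      Summable (fun k => prv (occ p 0 k) j) → Summable (fun k => occ p 0 k (j + 1)) →
      G j = occ p 0 0 j + A * p j + 1 / 2 * G (j + 1) + 1 / 2 * ∑' k, prv (occ p 0 k) j := by
    intro j hj hpj hj1
    have h1 : G j = occ p 0 0 j + ∑' k, occ p 0 (k + 1) j := hj.tsum_eq_zero_add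
    have h2 := ((hs0.hasSum.mul_right (p j)).add (hj1.hasSum.mul_left (1 / 2))).add
      (hpj.hasSum.mul_left (1 / 2))
    have h3 : ∑' k, occ p 0 (k + 1) j = A * p j + 1 / 2 * G (j + 1)
        + 1 / 2 * ∑' k, prv (occ p 0 k) j := by
      rw [tsum_congr (fun k => occ_succ p k j)]
      exact h2.tsum_eq
    rw [h1, h3]
    ring
  have r0 := hrec 0 hs0 hz hs1
  have r1 := hrec 1 hs1 hz (hs2 0).2
  have rr : ∀ n, G (n + 2) = A * p (n + 2) + 1 / 2 * G (n + 3) + 1 / 2 * G (n + 1) := by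
    intro n
    have := hrec (n + 2) (hs2 n).2 (hs2 n).1 (hs2 (n + 1)).2
    have e : occ p 0 0 (n + 2) = 0 := by simp [occ]
    have e' : ∑' k, prv (occ p 0 k) (n + 2) = G (n + 1) := rfl
    rw [e, e'] at this
    linarith
  have e0 : occ p 0 0 0 = 1 := by simp [occ]
  have e1 : occ p 0 0 1 = 0 := by simp [occ]
  simp only [prv, tsum_zero, e0, e1, hG0, zero_add] at r0 r1
  have hD : ∀ n, 1 / 2 * G (n + 2) - 1 / 2 * G (n + 1)
      = A * (1 - ∑ i ∈ Finset.range (n + 2), p i) - 1 := by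
    intro n
    induction n with
    | zero =>
      simp only [Finset.sum_range_succ, Finset.range_zero, Finset.sum_empty, zero_add]
      norm_num at r0 r1 ⊢
      linarith
    | succ n ih =>
      rw [Finset.sum_range_succ]
      have := rr n
      have e3 : G (n + 1 + 2) = G (n + 3) := rfl
      have e4 : G (n + 1 + 1) = G (n + 2) := rfl
      have e5 : p (n + 1 + 1) = p (n + 2) := rfl
      have e6 : ∑ i ∈ Finset.range (n + 1 + 1), p i = ∑ i ∈ Finset.range (n + 2), p i := rfl
      rw [e3, e4, e5, e6]
      linarith
  rw [div_le_iff₀ hd]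
  by_contra! hlt
  obtain ⟨c, hc1, hc2⟩ := exists_between hlt
  have ht : Filter.Tendsto (fun n => A * (1 - ∑ i ∈ Finset.range n, p i)) Filter.atTop
      (nhds (A * (1 - ∑' j, p j))) :=
    (hpsum.hasSum.tendsto_sum_nat.const_sub 1).const_mul A
  obtain ⟨N, hN⟩ := Filter.eventually_atTop.1 (ht.eventually_lt_const hc1)
  have hm : ∀ m : ℕ, 1 / 2 * G (N + m + 1) ≤ 1 / 2 * G (N + 1) - m * (1 - c) := by
    intro m
    induction m with
    | zero => simp
    | succ m ih =>
      have h1 := hD (N + m)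
      have h2 := hN (N + m + 2) (by omega)
      have e3 : G (N + (m + 1) + 1) = G (N + m + 2) := rfl
      rw [e3]
      push_cast
      linarith
  obtain ⟨m, hm'⟩ := exists_nat_gt (1 / 2 * G (N + 1) / (1 - c))
  rw [div_lt_iff₀ (by linarith)] at hm'
  have := hm m
  have := hGnn (N + m + 1)
  linarith
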